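/- arXiv:2411.14897 — 2 statements merged into one kernel-verified Lean document; each statement's English description precedes it below -/
import Mathlib

section
/- For any [αβ⁻¹] ∈ Q_Γ with αβ⁻¹ in right normal form, the element [αβ⁻¹] is regular (i.e., there exists x ∈ Q_Γ with [αβ⁻¹]·x·[αβ⁻¹] = [αβ⁻¹]) if and only if α ∈ RLP(Γ) or [αβ⁻¹] = [0]. -/
/-!
For a word `w = g₁⋯gₙ` in the generators, call a junction `gᵢgᵢ₊₁` *broken* if `r(gᵢ) ≠ s(gᵢ₊₁)`.
Every defining relation of `Q_Γ` whose right-hand side is not `0` preserves the source, the range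
and the number of broken junctions of any word containing it. These three data multiply
associatively (`JData`), so on the complement of the class of `0` they are invariants of the
congruence (`jmap_eq_of_qcon`), and the number of broken junctions of a product is at least the
sum of those of its factors.

If `[w]x[w] = [w] ≠ [0]` with `w = αβ⁻¹`, the number `c` of broken junctions of `w` therefore
satisfies `2c ≤ c`, whence `c = 0` and in particular `α` is linear. Conversely, if `α` is linear,
then, `β` being linear too, `α⁻¹α = r(α) = r(β) = β⁻¹β` (`Qofw_invWord_mul_word`), and `βα⁻¹` is
an inverse of `αβ⁻¹`.
-/

namespace NetworkSemigroup

/-- A network: vertices `V`, relations `T`, with source and range maps assigning to each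
relation disjoint nonempty subsets of `V`. -/
structure Network (V T : Type) where
  s : T → Set V
  r : T → Set V
  s_nonempty : ∀ t, (s t).Nonempty
  r_nonempty : ∀ t, (r t).Nonempty
  disj : ∀ t, s t ∩ r t = ∅

variable {V T : Type}

/-- Membership in `T⁰`: sources and ranges of relations, together with singletons of vertices. -/
def Network.InT0 (N : Network V T) (A : Set V) : Prop :=
  (∃ t, A = N.s t) ∨ (∃ t, A = N.r t) ∨ (∃ v : V, A = {v})

/-- The set `T⁰` as a type. -/
def Network.T0 (N : Network V T) : Type := { A : Set V // N.InT0 A }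

/-- The generating set `X = T ∪ T⁰ ∪ T⁻¹ ∪ {0}` of the presentation of `Q_Γ`. -/
inductive Gen (N : Network V T) : Type
  | pos : T → Gen N
  | neg : T → Gen N
  | ver : N.T0 → Gen N
  | zero : Gen N

namespace Gen

variable {N : Network V T}

/-- The source (as a set of vertices) of a generator. -/
def srcSet : Gen N → Set V
  | .pos t => N.s t
  | .neg t => N.r t
  | .ver A => A.1
  | .zero => ∅

/-- The range (as a set of vertices) of a generator. -/
def rngSet : Gen N → Set V
  | .pos t => N.r t
  | .neg t => N.s t
  | .ver A => A.1
  | .zero => ∅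

/-- The source of a generator, as the corresponding element of `T⁰`. -/
def srcGen : Gen N → Gen N
  | .pos t => .ver ⟨N.s t, Or.inl ⟨t, rfl⟩⟩
  | .neg t => .ver ⟨N.r t, Or.inr (Or.inl ⟨t, rfl⟩)⟩
  | .ver A => .ver A
  | .zero => .zero

/-- The range of a generator, as the corresponding element of `T⁰`. -/
def rngGen : Gen N → Gen N
  | .pos t => .ver ⟨N.r t, Or.inr (Or.inl ⟨t, rfl⟩)⟩
  | .neg t => .ver ⟨N.s t, Or.inl ⟨t, rfl⟩⟩
  | .ver A => .ver A
  | .zero => .zero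

end Gen

open FreeSemigroup

/-- The defining relations (NR1)–(NR6) of the presentation of `Q_Γ`, as a binary relation on
the free semigroup over the generators. -/
inductive NRel (N : Network V T) : FreeSemigroup (Gen N) → FreeSemigroup (Gen N) → Prop
  | nr1l (g : Gen N) (hg : g ≠ .zero) : NRel N (of g.srcGen * of g) (of g)
  | nr1r (g : Gen N) (hg : g ≠ .zero) : NRel N (of g * of g.rngGen) (of g)
  | nr2 (g₁ g₂ : Gen N) (h₁ : g₁ ≠ .zero) (h₂ : g₂ ≠ .zero)
      (h : g₁.rngSet ∩ g₂.srcSet = ∅) : NRel N (of g₁ * of g₂) (of .zero)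
  | nr3 (t₁ t₂ : T) (h : t₁ ≠ t₂) :
      NRel N (of (.neg t₁) * of (.pos t₂)) (of .zero)
  | nr4 (t : T) :
      NRel N (of (.neg t) * of (.pos t)) (of (.ver ⟨N.r t, Or.inr (Or.inl ⟨t, rfl⟩)⟩))
  | nr5 (t : T) (A : N.T0) (h : A.1 ≠ N.s t) :
      NRel N (of (.neg t) * of (.ver A)) (of .zero)
  | nr6l (x : Gen N) : NRel N (of .zero * of x) (of .zero)
  | nr6r (x : Gen N) : NRel N (of x * of .zero) (of .zero)

/-- The congruence on the free semigroup generated by the defining relations. -/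
def QCon (N : Network V T) : Con (FreeSemigroup (Gen N)) := conGen (NRel N)

/-- The semigroup `Q_Γ` given by the presentation `⟨X : R⟩`. -/
abbrev QGamma (N : Network V T) : Type := (QCon N).Quotient

/-- The congruence class of a word. -/
def Qofw {N : Network V T} (w : FreeSemigroup (Gen N)) : QGamma N := (w : (QCon N).Quotient)

/-- The zero element `[0]` of `Q_Γ`. -/
def Qzero (N : Network V T) : QGamma N := Qofw (of .zero)

/-- Path symbols: elements of `T ∪ T⁰`. -/
def PSym (N : Network V T) : Type := T ⊕ N.T0

namespace PSym

variable {N : Network V T}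

/-- The source of a path symbol. -/
def src : PSym N → Set V
  | Sum.inl t => N.s t
  | Sum.inr A => A.1

/-- The range of a path symbol. -/
def rng : PSym N → Set V
  | Sum.inl t => N.r t
  | Sum.inr A => A.1

/-- The generator corresponding to a path symbol. -/
def toGen : PSym N → Gen N
  | Sum.inl t => Gen.pos t
  | Sum.inr A => Gen.ver A

/-- The generator corresponding to the inverse of a path symbol (`t ↦ t⁻¹`, `A ↦ A`). -/
def toInvGen : PSym N → Gen N
  | Sum.inl t => Gen.neg t
  | Sum.inr A => Gen.ver A

/-- The path symbol is the element of `T⁰` given by the set `B`. -/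
def IsVerOf : PSym N → Set V → Prop
  | Sum.inl _, _ => False
  | Sum.inr A, B => A.1 = B

end PSym

/-- `L` is a path: a nonempty sequence of elements of `T ∪ T⁰` in which the range of each
symbol meets the source of the next one. -/
def IsPath (N : Network V T) (L : List (PSym N)) : Prop :=
  L ≠ [] ∧ ∀ (i : ℕ) (a b : PSym N), L[i]? = some a → L[i + 1]? = some b →
    (a.rng ∩ b.src).Nonempty

/-- `L` is linear: the range of each symbol equals the source of the next one. -/
def IsLinear (N : Network V T) (L : List (PSym N)) : Prop :=
  ∀ (i : ℕ) (a b : PSym N), L[i]? = some a → L[i + 1]? = some b → a.rng = b.src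

/-- `L = t₁⋯tₙ` is reduced: `t_{n-1} ≠ s(tₙ)` and, for `1 < i < n`,
`t_{i-1} ≠ s(tᵢ)` and `t_{i+1} ≠ r(tᵢ)`. -/
def IsReducedPath (N : Network V T) (L : List (PSym N)) : Prop :=
  (∀ (i : ℕ) (a b : PSym N), L[i]? = some a → L[i + 1]? = some b →
      i + 2 = L.length → ¬ a.IsVerOf b.src) ∧
  (∀ (i : ℕ) (a b c : PSym N), L[i]? = some a → L[i + 1]? = some b → L[i + 2]? = some c →
      ¬ a.IsVerOf b.src ∧ ¬ c.IsVerOf b.rng)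

/-- `RP(Γ)`: reduced paths. -/
def RP (N : Network V T) : Set (List (PSym N)) :=
  { L | IsPath N L ∧ IsReducedPath N L }

/-- `RLP(Γ)`: reduced linear paths. -/
def RLP (N : Network V T) : Set (List (PSym N)) :=
  { L | IsPath N L ∧ IsLinear N L ∧ IsReducedPath N L }

/-- The source `s(α)` of a path. -/
def pathSrc (N : Network V T) (L : List (PSym N)) : Set V :=
  match L.head? with
  | some a => a.src
  | none => ∅

/-- The range `r(α)` of a path. -/
def pathRng (N : Network V T) (L : List (PSym N)) : Set V :=
  match L.getLast? with
  | some a => a.rng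
  | none => ∅

/-- The path is a single symbol from `T⁰` (an "empty path"). -/
def InT0Path (N : Network V T) (L : List (PSym N)) : Prop :=
  ∃ A : N.T0, L = [Sum.inr A]

/-- The word of the free semigroup determined by a nonempty list of generators
(by convention the empty list is sent to the word `0`). -/
def genWord {N : Network V T} : List (Gen N) → FreeSemigroup (Gen N)
  | [] => of .zero
  | a :: M => ⟨a, M⟩

/-- The word `α` of a path `α`. -/
def word {N : Network V T} (L : List (PSym N)) : FreeSemigroup (Gen N) :=
  genWord (L.map PSym.toGen)

/-- The word `α⁻¹ = tₙ⁻¹⋯t₁⁻¹` of a path `α = t₁⋯tₙ`. -/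
def invWord {N : Network V T} (L : List (PSym N)) : FreeSemigroup (Gen N) :=
  genWord (L.reverse.map PSym.toInvGen)

/-- `αβ⁻¹` is in right normal form: `α ∈ RP(Γ)`, `β ∈ RLP(Γ)` and `r(α) = r(β)`. -/
def IsRNF (N : Network V T) (α β : List (PSym N)) : Prop :=
  α ∈ RP N ∧ β ∈ RLP N ∧ pathRng N α = pathRng N β

/-- The element `[αβ⁻¹]` of `Q_Γ`. -/
def Qrnf (N : Network V T) (α β : List (PSym N)) : QGamma N :=
  Qofw (word α * invWord β)

/-- The relation `L*`: `a L* b` iff for all `x, y ∈ S¹`, `ax = ay ⇔ bx = by`. -/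
def LStar {S : Type*} [Semigroup S] (a b : S) : Prop :=
  ∀ x y : WithOne S,
    (a : WithOne S) * x = (a : WithOne S) * y ↔ (b : WithOne S) * x = (b : WithOne S) * y

/-- The relation `R*`: `a R* b` iff for all `x, y ∈ S¹`, `xa = ya ⇔ xb = yb`. -/
def RStar {S : Type*} [Semigroup S] (a b : S) : Prop :=
  ∀ x y : WithOne S,
    x * (a : WithOne S) = y * (a : WithOne S) ↔ x * (b : WithOne S) = y * (b : WithOne S)

/-- Green's relation `R`: `a R b` iff `aS¹ = bS¹`. -/
def GreenR {S : Type*} [Semigroup S] (a b : S) : Prop :=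
  (∃ x : WithOne S, (a : WithOne S) * x = b) ∧ ∃ y : WithOne S, (b : WithOne S) * y = a

/-- Green's relation `L`: `a L b` iff `S¹a = S¹b`. -/
def GreenL {S : Type*} [Semigroup S] (a b : S) : Prop :=
  (∃ x : WithOne S, x * (a : WithOne S) = b) ∧ ∃ y : WithOne S, y * (b : WithOne S) = a

/-- Green's relation `H = L ∩ R`. -/
def GreenH {S : Type*} [Semigroup S] (a b : S) : Prop :=
  GreenL a b ∧ GreenR a b

/-! ### Broken junctions as an invariant of the congruence -/

/-- Junction data of a word: its source, its number of broken junctions and its range. -/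
@[ext]
structure JData (V : Type) where
  src : Set V
  cnt : ℕ
  rng : Set V

open Classical in
/-- Concatenation adds the counts, plus one if the new junction is broken. -/
noncomputable instance : Semigroup (JData V) where
  mul a b := ⟨a.src, a.cnt + b.cnt + (if a.rng = b.src then 0 else 1), b.rng⟩
  mul_assoc a b c := by
    ext1
    · rfl
    · change a.cnt + b.cnt + (if a.rng = b.src then 0 else 1) + c.cnt +
        (if b.rng = c.src then 0 else 1) = a.cnt + (b.cnt + c.cnt +
        (if b.rng = c.src then 0 else 1)) + (if a.rng = b.src then 0 else 1)
      omega
    · rfl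

open Classical in
theorem JData.mul_def (a b : JData V) :
    a * b = ⟨a.src, a.cnt + b.cnt + (if a.rng = b.src then 0 else 1), b.rng⟩ := rfl

/-- The junction data of a word. The letter `0` is treated as having empty source and range; this
choice is immaterial, since the data are only used for words not congruent to `0`. -/
noncomputable def jmap (N : Network V T) : FreeSemigroup (Gen N) →ₙ* JData V :=
  FreeSemigroup.lift fun g => ⟨g.srcSet, 0, g.rngSet⟩

theorem jmap_of {N : Network V T} (g : Gen N) : jmap N (of g) = ⟨g.srcSet, 0, g.rngSet⟩ :=
  FreeSemigroup.lift_of _ _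

section Zero

variable {N : Network V T}

theorem zero_qcon_mul (w : FreeSemigroup (Gen N)) : QCon N (of .zero * w) (of .zero) := by
  induction w using FreeSemigroup.recOnMul with
  | ih1 g => exact ConGen.Rel.of _ _ (.nr6l g)
  | ih2 g w hg hw =>
    have h := (QCon N).mul hg ((QCon N).refl w)
    rw [mul_assoc] at h
    exact (QCon N).trans h hw

theorem qcon_mul_zero (w : FreeSemigroup (Gen N)) : QCon N (w * of .zero) (of .zero) := by
  induction w using FreeSemigroup.recOnMul with
  | ih1 g => exact ConGen.Rel.of _ _ (.nr6r g)
  | ih2 g w hg hw =>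
    have h := (QCon N).mul ((QCon N).refl (of g)) hw
    rw [← mul_assoc] at h
    exact (QCon N).trans h hg

theorem qcon_zero_mul {w : FreeSemigroup (Gen N)} (hw : QCon N w (of .zero))
    (u : FreeSemigroup (Gen N)) : QCon N (w * u) (of .zero) :=
  (QCon N).trans ((QCon N).mul hw ((QCon N).refl u)) (zero_qcon_mul u)

theorem mul_qcon_zero {w : FreeSemigroup (Gen N)} (hw : QCon N w (of .zero))
    (u : FreeSemigroup (Gen N)) : QCon N (u * w) (of .zero) :=
  (QCon N).trans ((QCon N).mul ((QCon N).refl u) hw) (qcon_mul_zero u)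

end Zero

/-- Congruent words that are not congruent to `0` have the same junction data: being congruent and
either both congruent to `0` or equal in junction data is a congruence containing the defining
relations. -/
theorem jmap_eq_of_qcon {N : Network V T} {w w' : FreeSemigroup (Gen N)} (h : QCon N w w') :
    QCon N w (of .zero) ∨ jmap N w = jmap N w' := by
  have key : ConGen.Rel (NRel N) w w' := h
  induction key with
  | of x y hxy =>
    cases hxy with
    | nr1l g hg =>
      right
      cases g <;> simp_all [jmap_of, JData.mul_def, Gen.srcSet, Gen.rngSet, Gen.srcGen]
    | nr1r g hg =>
      right
      cases g <;> simp_all [jmap_of, JData.mul_def, Gen.srcSet, Gen.rngSet, Gen.rngGen]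
    | nr2 | nr3 | nr5 | nr6l | nr6r => exact .inl h
    | nr4 t =>
      right
      simp [jmap_of, JData.mul_def, Gen.srcSet, Gen.rngSet]
  | refl x => exact .inr rfl
  | symm hr ih =>
    rcases ih hr with h0 | h1
    · exact .inl ((QCon N).trans h h0)
    · exact .inr h1.symm
  | trans hr hr' ih ih' =>
    rcases ih hr with h0 | h1
    · exact .inl h0
    · rcases ih' hr' with h0 | h2
      · exact .inl ((QCon N).trans hr h0)
      · exact .inr (h1.trans h2)
  | mul hr hr' ih ih' =>
    rcases ih hr with h0 | h1
    · exact .inl (qcon_zero_mul h0 _)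
    · rcases ih' hr' with h0 | h2
      · exact .inl (mul_qcon_zero h0 _)
      · exact .inr (by rw [map_mul, map_mul, h1, h2])

/-! ### Linear paths and cancellation -/

section Paths

variable {N : Network V T}

theorem word_cons_cons (a b : PSym N) (L : List (PSym N)) :
    word (a :: b :: L) = of a.toGen * word (b :: L) := rfl

theorem invWord_cons_cons (a b : PSym N) (L : List (PSym N)) :
    invWord (a :: b :: L) = invWord (b :: L) * of a.toInvGen := by
  unfold invWord
  have hne : ((b :: L).reverse.map PSym.toInvGen) ≠ [] := by simp
  rw [List.reverse_cons, List.map_append]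
  revert hne
  generalize (b :: L).reverse.map PSym.toInvGen = M
  intro hne
  cases M with
  | nil => exact absurd rfl hne
  | cons g M => rfl

theorem isLinear_cons_cons {a b : PSym N} {L : List (PSym N)} :
    IsLinear N (a :: b :: L) ↔ a.rng = b.src ∧ IsLinear N (b :: L) := by
  constructor
  · intro h
    exact ⟨h 0 a b rfl rfl, fun i x y hx hy => h (i + 1) x y hx hy⟩
  · rintro ⟨h1, h2⟩ i x y hx hy
    cases i with
    | zero =>
      simp only [List.getElem?_cons_zero, Option.some.injEq, zero_add,
        List.getElem?_cons_succ] at hx hy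
      rw [← hx, ← hy, h1]
    | succ i => exact h2 i x y hx hy

theorem pathRng_cons_cons (a b : PSym N) (L : List (PSym N)) :
    pathRng N (a :: b :: L) = pathRng N (b :: L) := by
  simp [pathRng]

theorem jmap_word_src (a : PSym N) (L : List (PSym N)) :
    (jmap N (word (a :: L))).src = a.src := by
  cases L with
  | nil =>
    change (jmap N (of a.toGen)).src = _
    rw [jmap_of]
    cases a <;> rfl
  | cons b L =>
    rw [word_cons_cons, map_mul, JData.mul_def, jmap_of]
    cases a <;> rfl

/-- A path word without broken junctions comes from a linear path. -/
theorem isLinear_of_cnt (L : List (PSym N)) (h : (jmap N (word L)).cnt = 0) : IsLinear N L := by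
  induction L with
  | nil => intro i a b ha; simp at ha
  | cons a L ih =>
    cases L with
    | nil => intro i a b ha hb; simp at hb
    | cons b L =>
      rw [word_cons_cons, map_mul, JData.mul_def, jmap_of] at h
      simp only [Nat.add_eq_zero_iff, jmap_word_src] at h
      obtain ⟨⟨-, h1⟩, h2⟩ := h
      rw [isLinear_cons_cons]
      refine ⟨?_, ih h1⟩
      by_contra hne
      have hr : a.toGen.rngSet = a.rng := by cases a <;> rfl
      rw [hr, if_neg hne] at h2
      exact absurd h2 one_ne_zero

theorem Qofw_mul (u w : FreeSemigroup (Gen N)) : Qofw (u * w) = Qofw u * Qofw w := rfl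

theorem Qofw_eq {u w : FreeSemigroup (Gen N)} (h : NRel N u w) : Qofw u = Qofw w :=
  (Con.eq _).2 (ConGen.Rel.of _ _ h)

theorem toGen_ne_zero (a : PSym N) : a.toGen ≠ .zero := by
  cases a <;> simp [PSym.toGen]

theorem inT0_rng (a : PSym N) : N.InT0 a.rng := by
  cases a with
  | inl t => exact Or.inr (Or.inl ⟨t, rfl⟩)
  | inr A => exact A.2

theorem inT0_src (a : PSym N) : N.InT0 a.src := by
  cases a with
  | inl t => exact Or.inl ⟨t, rfl⟩
  | inr A => exact A.2

theorem inT0_pathRng {L : List (PSym N)} (hL : L ≠ []) : N.InT0 (pathRng N L) := by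
  unfold pathRng
  rw [List.getLast?_eq_some_getLast hL]
  exact inT0_rng _

theorem src_mul_sym (a : PSym N) :
    Qofw (of (.ver ⟨a.src, inT0_src a⟩)) * Qofw (of a.toGen) = Qofw (of a.toGen) := by
  have h := Qofw_eq (.nr1l a.toGen (toGen_ne_zero a))
  cases a <;> exact h

theorem sym_mul_rng (a : PSym N) :
    Qofw (of a.toGen) * Qofw (of (.ver ⟨a.rng, inT0_rng a⟩)) = Qofw (of a.toGen) := by
  have h := Qofw_eq (.nr1r a.toGen (toGen_ne_zero a))
  cases a <;> exact h

theorem inv_mul_sym (a : PSym N) :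
    Qofw (of a.toInvGen) * Qofw (of a.toGen) = Qofw (of (.ver ⟨a.rng, inT0_rng a⟩)) := by
  cases a with
  | inl t => exact Qofw_eq (.nr4 t)
  | inr A => exact Qofw_eq (.nr1l (.ver A) (by simp))

theorem src_mul_word (a : PSym N) (L : List (PSym N)) :
    Qofw (of (.ver ⟨a.src, inT0_src a⟩)) * Qofw (word (a :: L)) = Qofw (word (a :: L)) := by
  cases L with
  | nil => exact src_mul_sym a
  | cons b L => rw [word_cons_cons, Qofw_mul, ← mul_assoc, src_mul_sym]

theorem word_mul_rng (L : List (PSym N)) (hL : L ≠ []) (A : N.T0) (hA : A.1 = pathRng N L) :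
    Qofw (word L) * Qofw (of (.ver A)) = Qofw (word L) := by
  induction L with
  | nil => exact absurd rfl hL
  | cons a L ih =>
    cases L with
    | nil =>
      have : A = ⟨a.rng, inT0_rng a⟩ := Subtype.ext hA
      rw [this]
      exact sym_mul_rng a
    | cons b L =>
      rw [word_cons_cons, Qofw_mul, mul_assoc, ih (by simp) (by rw [hA, pathRng_cons_cons])]

/-- In `Q_Γ`, a linear path satisfies `L⁻¹L = r(L)`: the cancellation of one symbol `t⁻¹t = r(t)`
leaves the source of the next symbol, which that symbol absorbs. -/
theorem Qofw_invWord_mul_word (L : List (PSym N)) (hL : L ≠ []) (hlin : IsLinear N L)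
    (A : N.T0) (hA : A.1 = pathRng N L) :
    Qofw (invWord L) * Qofw (word L) = Qofw (of (.ver A)) := by
  induction L with
  | nil => exact absurd rfl hL
  | cons a L ih =>
    cases L with
    | nil =>
      have : A = ⟨a.rng, inT0_rng a⟩ := Subtype.ext hA
      rw [this]
      exact inv_mul_sym a
    | cons b L =>
      rw [isLinear_cons_cons] at hlin
      have hab : (⟨a.rng, inT0_rng a⟩ : N.T0) = ⟨b.src, inT0_src b⟩ := Subtype.ext hlin.1
      rw [word_cons_cons, invWord_cons_cons, Qofw_mul, Qofw_mul, mul_assoc,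
        ← mul_assoc (Qofw (of a.toInvGen)), inv_mul_sym, hab, src_mul_word]
      exact ih (by simp) hlin.2 (by rw [hA, pathRng_cons_cons])

end Paths

/-! ### Regularity -/

/-- an element `[αβ⁻¹]` of `Q_Γ` in right normal form is regular if and only if
`α ∈ RLP(Γ)` or `[αβ⁻¹] = [0]`. -/
theorem regular_iff (N : Network V T) (α β : List (PSym N)) (h : IsRNF N α β) :
    (∃ x : QGamma N, Qrnf N α β * x * Qrnf N α β = Qrnf N α β) ↔
      (α ∈ RLP N ∨ Qrnf N α β = Qzero N) := by
  obtain ⟨⟨hα, hαr⟩, ⟨hβ, hβl, -⟩, hr⟩ := h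
  constructor
  · rintro ⟨x, hx⟩
    by_cases h0 : Qrnf N α β = Qzero N
    · exact .inr h0
    left
    obtain ⟨u, rfl⟩ := Quot.exists_rep x
    have hc : QCon N (word α * invWord β * u * (word α * invWord β)) (word α * invWord β) :=
      (Con.eq _).1 hx
    rcases jmap_eq_of_qcon hc with hz | hj
    · exact absurd ((Con.eq _).2 ((QCon N).trans ((QCon N).symm hc) hz)) h0
    · refine ⟨hα, isLinear_of_cnt α ?_, hαr⟩
      have hj := congrArg JData.cnt hj
      simp only [map_mul, JData.mul_def] at hj
      omega
  · rintro (⟨-, hαl, -⟩ | h0)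
    · refine ⟨Qofw (word β * invWord α), ?_⟩
      have hw := word_mul_rng α hα.1 ⟨_, inT0_pathRng hα.1⟩ rfl
      have e1 := Qofw_invWord_mul_word α hα.1 hαl ⟨_, inT0_pathRng hα.1⟩ rfl
      have e2 := Qofw_invWord_mul_word β hβ.1 hβl ⟨_, inT0_pathRng hα.1⟩ hr
      calc Qofw (word α * invWord β) * Qofw (word β * invWord α) * Qofw (word α * invWord β)
          = Qofw (word α) * (Qofw (invWord β) * Qofw (word β)) *
              (Qofw (invWord α) * Qofw (word α)) * Qofw (invWord β) := by
            simp only [Qofw_mul, mul_assoc]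
        _ = Qofw (word α * invWord β) := by rw [e1, e2, hw, hw, Qofw_mul]
    · refine ⟨Qzero N, ?_⟩
      rw [h0]
      exact (Con.eq _).2 (qcon_zero_mul (zero_qcon_mul _) _)

end NetworkSemigroup
end

section
/- For any network Γ, the semigroup Q_Γ is a right *-abundant semigroup with a zero element: every L*-class of Q_Γ contains exactly one idempotent, and [0] is a zero. -/
/-!
The semigroup `Q_Γ` acts on the left on normal forms `αβ⁻¹`. In a normal form the path `α` is
recorded as a sequence of steps `t` and of changes `A C` between distinct intersecting members of
`T⁰`, with `s(t)` and `r(t)` suppressed whenever they are implied by the neighbouring symbols, and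
`β⁻¹` is a sequence of inverse symbols. The action respects (NR1)–(NR6) (`act_rel`). Since it is
compatible with taking the value of a normal form, every element is the value of its normal form
(`val_nf`), so distinct elements have distinct normal forms.

The path part `α` of a nonzero element is left cancellable (`factor`): for a symbol `t` because
`t⁻¹t = r(t)`, and for a change of vertex set because the normal form of the right-hand factor can
be read off. As `β⁻¹β = r(β)`, this shows that `αβ⁻¹` is `L*`-related to the idempotent `ββ⁻¹`
(`exists_idem`).

For uniqueness, `L*`-related idempotents `e`, `f` satisfy `ef = e` and `fe = f`. Write
`e = αβ⁻¹` and `f = γδ⁻¹`. Cancelling `α` and `γ` yields `β⁻¹e = β⁻¹ = β⁻¹f` and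
`δ⁻¹f = δ⁻¹ = δ⁻¹e`. The product of an inverse path with a normal form is governed by prefixes
(`tact_cases`), and comparing lengths forces `e = ββ⁻¹ = f` (`idem_unique`).
-/

namespace NetworkSemigroup

variable {V T : Type}

open FreeSemigroup

/-! ### The left action on normal forms -/

/-- The source `s(t)` as an element of `T⁰`. -/
def Network.sT (N : Network V T) (t : T) : N.T0 := ⟨N.s t, Or.inl ⟨t, rfl⟩⟩

/-- The range `r(t)` as an element of `T⁰`. -/
def Network.rT (N : Network V T) (t : T) : N.T0 := ⟨N.r t, Or.inr (Or.inl ⟨t, rfl⟩)⟩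

lemma T0_nonempty {N : Network V T} (A : N.T0) : A.1.Nonempty := by
  obtain ⟨A, ⟨t, rfl⟩ | ⟨t, rfl⟩ | ⟨v, rfl⟩⟩ := A
  · exact N.s_nonempty t
  · exact N.r_nonempty t
  · exact Set.singleton_nonempty v

/-- The inverse part `t₁⁻¹ ⋯ tₘ⁻¹ A` of a normal form. Composability `s(tᵢ) = r(tᵢ₊₁)` is not
required: a non-composable term has value `[0]`. -/
inductive Tail (N : Network V T) : Type
  | vert : N.T0 → Tail N
  | inv : T → Tail N → Tail N

/-- Nonzero normal forms: a path, recorded as steps `t` and changes of vertex set `A C` with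
`A ≠ C`, followed by an inverse part. Composability is again not required. -/
inductive NF (N : Network V T) : Type
  | tail : Tail N → NF N
  | pos : T → NF N → NF N
  | hop : (A C : N.T0) → A ≠ C → NF N → NF N

variable {N : Network V T}

/-- The element of `T⁰` at which an inverse part starts. -/
def Tail.src : Tail N → N.T0
  | .vert A => A
  | .inv t _ => N.rT t

/-- The number of inverse symbols. -/
def Tail.len : Tail N → ℕ
  | .vert _ => 0
  | .inv _ τ => τ.len + 1

/-- The element of `T⁰` at which a normal form starts. -/
def NF.src : NF N → N.T0
  | .tail τ => τ.src
  | .pos t _ => N.sT t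
  | .hop A _ _ _ => A

/-- The inverse part of a normal form. -/
def NF.inverse : NF N → Tail N
  | .tail τ => τ
  | .pos _ y => y.inverse
  | .hop _ _ _ y => y.inverse

/-- The number of steps in the path part of a normal form. -/
def NF.len : NF N → ℕ
  | .tail _ => 0
  | .pos _ y => y.len + 1
  | .hop _ _ _ y => y.len + 1

open Classical in
/-- Left multiplication of a normal form by `A ∈ T⁰`; `none` stands for zero. -/
noncomputable def vact (A : N.T0) (y : NF N) : Option (NF N) :=
  if h : A = y.src then some y
  else if (A.1 ∩ y.src.1).Nonempty then some (.hop A y.src h y) else none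

open Classical in
/-- Left multiplication of a normal form by `t⁻¹`. In the case `t⁻¹ t y` the result is `r(t) y`
rather than `y`; the two agree for composable terms, and with this choice the defining relations
hold on all terms. -/
noncomputable def nact (t : T) : NF N → Option (NF N)
  | .tail τ => if τ.src = N.sT t then some (.tail (.inv t τ)) else none
  | .pos t' y => if t = t' then vact (N.rT t) y else none
  | .hop _ _ _ _ => none

/-- Left multiplication of a normal form by a generator. -/
noncomputable def gact : Gen N → NF N → Option (NF N)
  | .pos t, y => (vact (N.rT t) y).map (.pos t)
  | .neg t, y => nact t y
  | .ver A, y => vact A y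
  | .zero, _ => none

/-- The normal form of the range of a generator, a right identity for it. -/
def base : Gen N → Option (NF N)
  | .pos t => some (.tail (.vert (N.rT t)))
  | .neg t => some (.tail (.vert (N.sT t)))
  | .ver A => some (.tail (.vert A))
  | .zero => none

/-- The action of a generator on the normal forms with zero, together with an extra point `none`
which plays the role of an adjoined identity: `g` sends it to the normal form of `[g]`. -/
noncomputable def act (g : Gen N) : Function.End (Option (Option (NF N)))
  | none => some ((base g).bind (gact g))
  | some x => some (x.bind (gact g))

lemma vact_src {A : N.T0} {y z : NF N} (h : vact A y = some z) : z.src = A := by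
  unfold vact at h
  split_ifs at h with h1 h2
  · simp_all
  · simp only [Option.some.injEq] at h; subst h; rfl

lemma vact_self {A : N.T0} {y : NF N} (h : y.src = A) : vact A y = some y := by
  simp [vact, h]

lemma vact_disj {A : N.T0} {y : NF N} (h : A.1 ∩ y.src.1 = ∅) : vact A y = none := by
  unfold vact
  have h1 : A ≠ y.src := by
    rintro rfl
    rw [Set.inter_self] at h
    exact (T0_nonempty y.src).ne_empty h
  simp [h1, h]

lemma vact_bind (A : N.T0) (y : NF N) (f : NF N → Option (NF N))
    (hf : ∀ z, z.src = A → f z = some z) : (vact A y).bind f = vact A y := by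
  cases h : vact A y with
  | none => rfl
  | some z => simpa using hf z (vact_src h)

lemma nact_ne {t : T} {y : NF N} (h : y.src ≠ N.sT t) : nact t y = none := by
  cases y with
  | tail τ => exact if_neg h
  | pos t' y =>
    have : t ≠ t' := by rintro rfl; exact h rfl
    simp [nact, this]
  | hop A C hAC y => rfl

lemma nact_src {t : T} {y z : NF N} (h : nact t y = some z) : z.src = N.rT t := by
  cases y with
  | tail τ =>
    simp only [nact] at h
    split_ifs at h
    simp only [Option.some.injEq] at h; subst h; rfl
  | pos t' y =>
    simp only [nact] at h
    split_ifs at h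
    exact vact_src h
  | hop A C hAC y => simp [nact] at h

lemma gact_src {g : Gen N} {y z : NF N} (h : gact g y = some z) : z.src.1 = g.srcSet := by
  cases g with
  | pos t =>
    simp only [gact, Option.map_eq_some_iff] at h
    obtain ⟨w, -, rfl⟩ := h; rfl
  | neg t => rw [nact_src h]; rfl
  | ver A => rw [vact_src h]; rfl
  | zero => simp [gact] at h

lemma gact_disj {g : Gen N} {y : NF N} (h : g.rngSet ∩ y.src.1 = ∅) : gact g y = none := by
  cases g with
  | pos t => simp only [gact, vact_disj (A := N.rT t) h, Option.map_none]
  | neg t =>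
    refine nact_ne fun h' => ?_
    rw [h', Gen.rngSet, Network.sT, Set.inter_self] at h
    exact (N.s_nonempty t).ne_empty h
  | ver A => exact vact_disj h
  | zero => rfl

lemma gact_srcGen (g : Gen N) (y : NF N) : (gact g y).bind (gact g.srcGen) = gact g y := by
  cases h : gact g y with
  | none => rfl
  | some z =>
    have hs := gact_src h
    cases g with
    | zero => simp [gact] at h
    | pos t => exact vact_self (Subtype.ext hs)
    | neg t => exact vact_self (Subtype.ext hs)
    | ver A => exact vact_self (Subtype.ext hs)

lemma gact_rngGen (g : Gen N) (y : NF N) : (gact g.rngGen y).bind (gact g) = gact g y := by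
  cases g with
  | zero => rfl
  | pos t =>
    change (vact (N.rT t) y).bind (fun y => (vact (N.rT t) y).map (NF.pos t)) =
      (vact (N.rT t) y).map (NF.pos t)
    cases h : vact (N.rT t) y with
    | none => rfl
    | some z => simp [vact_self (vact_src h)]
  | neg t =>
    change (vact (N.sT t) y).bind (nact t) = nact t y
    by_cases h : y.src = N.sT t
    · simp [vact_self h]
    · rw [nact_ne h]
      unfold vact
      have h' : N.sT t ≠ y.src := fun h' => h h'.symm
      rw [dif_neg h']
      split_ifs <;> rfl
  | ver A =>
    exact vact_bind A y _ fun z hz => vact_self hz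

/-- The defining relations hold for the action on normal forms. -/
lemma act_rel {a b : FreeSemigroup (Gen N)} (h : NRel N a b) : lift act a = lift act b := by
  have key (g₁ g₂ g₃ : Gen N) (h : ∀ y, (gact g₂ y).bind (gact g₁) = gact g₃ y)
      (hb : (base g₂).bind (gact g₃) = (base g₃).bind (gact g₃)) :
      lift act (of g₁ * of g₂) = lift act (of g₃) := by
    rw [map_mul, lift_of, lift_of, lift_of]
    funext x
    change act g₁ (act g₂ x) = act g₃ x
    rcases x with _ | _ | y
    · change some (((base g₂).bind (gact g₂)).bind (gact g₁)) = some ((base g₃).bind (gact g₃))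
      rw [Option.bind_assoc, ← hb]
      simp only [h]
    · rfl
    · exact congrArg some (h y)
  have key0 (g₁ g₂ : Gen N) (h : ∀ y, (gact g₂ y).bind (gact g₁) = none) :
      lift act (of g₁ * of g₂) = lift act (of .zero) := by
    refine key _ _ _ h ?_
    cases base g₂ <;> rfl
  cases h with
  | nr1l g hg => exact key _ _ _ (gact_srcGen g) rfl
  | nr1r g hg =>
    refine key _ _ _ (gact_rngGen g) ?_
    cases g <;> rfl
  | nr2 g₁ g₂ h₁ h₂ h =>
    refine key0 _ _ fun y => ?_
    cases hy : gact g₂ y with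
    | none => rfl
    | some z => exact gact_disj (by rw [gact_src hy, h])
  | nr3 t₁ t₂ h =>
    refine key0 _ _ fun y => ?_
    change ((vact (N.rT t₂) y).map (.pos t₂)).bind (nact t₁) = none
    cases vact (N.rT t₂) y with
    | none => rfl
    | some z => simp [nact, h]
  | nr4 t =>
    refine key _ _ _ (fun y => ?_) rfl
    change ((vact (N.rT t) y).map (.pos t)).bind (nact t) = vact (N.rT t) y
    cases h : vact (N.rT t) y with
    | none => rfl
    | some z => simp [nact, vact_self (vact_src h)]
  | nr5 t A h =>
    refine key0 _ _ fun y => ?_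
    change (vact A y).bind (nact t) = none
    cases hy : vact A y with
    | none => rfl
    | some z =>
      refine nact_ne ?_
      rw [vact_src hy]
      exact fun h' => h (congrArg Subtype.val h')
  | nr6l x =>
    refine key0 _ _ fun y => ?_
    cases gact x y <;> rfl
  | nr6r x => exact key0 _ _ fun y => rfl

/-- The action of `Q_Γ` on normal forms. -/
noncomputable def qact (q : QGamma N) : Function.End (Option (Option (NF N))) :=
  Con.liftOn q (fun w => lift act w) fun a b h => by
    have : QCon N ≤ Con.ker (lift (act (N := N))) := Con.conGen_le.2 fun _ _ h => act_rel h
    exact this h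

lemma qact_mul (p q : QGamma N) : qact (p * q) = qact p * qact q := by
  induction p using Con.induction_on with | _ a
  induction q using Con.induction_on with | _ b
  exact map_mul (lift act) a b

/-! ### The value of a normal form -/

/-- The class of a generator. -/
def gen (g : Gen N) : QGamma N := Qofw (of g)

lemma gen_rel {a b : FreeSemigroup (Gen N)} (h : NRel N a b) : Qofw a = Qofw b :=
  (Con.eq _).2 (Con.le_conGen _ _ h)

lemma q_ind {P : QGamma N → Prop} (h1 : ∀ g, P (gen g)) (h2 : ∀ g q, P q → P (gen g * q))
    (q : QGamma N) : P q := by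
  induction q using Con.induction_on with | _ w
  induction w using FreeSemigroup.recOnMul with
  | ih1 x => exact h1 x
  | ih2 x y hx hy => exact h2 x _ hy

lemma zero_mul_q (a : QGamma N) : Qzero N * a = Qzero N := by
  induction a using q_ind with
  | h1 g => exact gen_rel (.nr6l g)
  | h2 g q hq =>
    have h : Qzero N * gen g = Qzero N := gen_rel (.nr6l g)
    rw [← mul_assoc, h, hq]

lemma mul_zero_q (a : QGamma N) : a * Qzero N = Qzero N := by
  induction a using q_ind with
  | h1 g => exact gen_rel (.nr6r g)
  | h2 g q hq =>
    rw [mul_assoc, hq]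
    exact gen_rel (.nr6r g)

/-- The class `[A]`. -/
def vx (A : N.T0) : QGamma N := gen (.ver A)

/-- The class `[t]`. -/
def ps (t : T) : QGamma N := gen (.pos t)

/-- The class `[t⁻¹]`. -/
def ng (t : T) : QGamma N := gen (.neg t)

lemma vx_vx (A : N.T0) : vx A * vx A = vx A := gen_rel (.nr1l (.ver A) (by simp))

lemma vx_ps (t : T) : vx (N.sT t) * ps t = ps t := gen_rel (.nr1l (.pos t) (by simp))

lemma ps_vx (t : T) : ps t * vx (N.rT t) = ps t := gen_rel (.nr1r (.pos t) (by simp))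

lemma vx_ng (t : T) : vx (N.rT t) * ng t = ng t := gen_rel (.nr1l (.neg t) (by simp))

lemma ng_vx (t : T) : ng t * vx (N.sT t) = ng t := gen_rel (.nr1r (.neg t) (by simp))

lemma ng_ps (t : T) : ng t * ps t = vx (N.rT t) := gen_rel (.nr4 t)

lemma ng_ps_ne {t t' : T} (h : t ≠ t') : ng t * ps t' = Qzero N := gen_rel (.nr3 t t' h)

lemma ng_vx_ne {t : T} {A : N.T0} (h : A ≠ N.sT t) : ng t * vx A = Qzero N :=
  gen_rel (.nr5 t A fun h' => h (Subtype.ext h'))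

lemma vx_disj {A C : N.T0} (h : A.1 ∩ C.1 = ∅) : vx A * vx C = Qzero N :=
  gen_rel (.nr2 (.ver A) (.ver C) (by simp) (by simp) h)

/-- The element of `Q_Γ` represented by an inverse part. -/
def Tail.val : Tail N → QGamma N
  | .vert A => vx A
  | .inv t τ => ng t * τ.val

/-- The element of `Q_Γ` represented by a normal form. -/
def NF.val : NF N → QGamma N
  | .tail τ => τ.val
  | .pos t y => ps t * y.val
  | .hop A C _ y => vx A * (vx C * y.val)

/-- The value of a normal form or zero. -/
def valO : Option (NF N) → QGamma N
  | none => Qzero N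
  | some y => y.val

lemma Tail.src_val (τ : Tail N) : vx τ.src * τ.val = τ.val := by
  cases τ with
  | vert A => exact vx_vx A
  | inv t τ => simp only [src, val, ← mul_assoc, vx_ng]

lemma NF.src_val (y : NF N) : vx y.src * y.val = y.val := by
  cases y with
  | tail τ => exact τ.src_val
  | pos t y => simp only [src, val, ← mul_assoc, vx_ps]
  | hop A C h y => simp only [src, val, ← mul_assoc, vx_vx]

lemma val_vact (A : N.T0) (y : NF N) : valO (vact A y) = vx A * y.val := by
  unfold vact
  split_ifs with h h'
  · subst h; exact y.src_val.symm
  · simp only [valO, NF.val, y.src_val]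
  · rw [← y.src_val, ← mul_assoc, vx_disj (Set.not_nonempty_iff_eq_empty.1 h'), zero_mul_q]
    rfl

lemma val_nact (t : T) (y : NF N) : valO (nact t y) = ng t * y.val := by
  by_cases h : y.src = N.sT t
  · cases y with
    | tail τ =>
      have h1 : nact t (.tail τ) = some (.tail (.inv t τ)) := if_pos h
      rw [h1]; rfl
    | pos t' y =>
      simp only [nact, NF.val]
      split_ifs with ht
      · subst ht
        rw [val_vact, ← mul_assoc, ng_ps]
      · rw [← mul_assoc, ng_ps_ne ht, zero_mul_q]; rfl
    | hop A C hAC y =>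
      obtain rfl : A = N.sT t := h
      simp only [NF.val, ← mul_assoc, ng_vx, ng_vx_ne hAC.symm, zero_mul_q]
      rfl
  · rw [nact_ne h, ← y.src_val, ← mul_assoc, ng_vx_ne h, zero_mul_q]; rfl

lemma val_gact (g : Gen N) (y : NF N) : valO (gact g y) = gen g * y.val := by
  cases g with
  | pos t =>
    change valO ((vact (N.rT t) y).map (NF.pos t)) = ps t * y.val
    have h : ps t * y.val = ps t * valO (vact (N.rT t) y) := by
      rw [val_vact, ← mul_assoc, ps_vx]
    rw [h]
    cases vact (N.rT t) y with
    | none => exact (mul_zero_q _).symm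
    | some z => rfl
  | neg t => exact val_nact t y
  | ver A => exact val_vact A y
  | zero => exact (zero_mul_q _).symm

lemma val_bind_gact (g : Gen N) (x : Option (NF N)) :
    valO (x.bind (gact g)) = gen g * valO x := by
  cases x with
  | none => exact (mul_zero_q _).symm
  | some y => exact val_gact g y

lemma gen_base (g : Gen N) : gen g * valO (base g) = gen g := by
  cases g with
  | pos t => exact ps_vx t
  | neg t => exact ng_vx t
  | ver A => exact vx_vx A
  | zero => exact zero_mul_q _

/-- The normal form of an element of `Q_Γ`, `none` standing for zero. -/
noncomputable def nf (q : QGamma N) : Option (NF N) := (qact q none).join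

lemma qact_gen (g : Gen N) : qact (gen g) = act g := lift_of act g

lemma qact_none (q : QGamma N) : qact q none = some (nf q) := by
  suffices h : ∃ x, qact q none = some x by
    obtain ⟨x, hx⟩ := h
    simp [nf, hx]
  induction q using q_ind with
  | h1 g => exact ⟨_, congrFun (qact_gen g) none⟩
  | h2 g q hq =>
    obtain ⟨x, hx⟩ := hq
    rw [qact_mul, qact_gen]
    change ∃ y, act g (qact q none) = some y
    rw [hx]
    exact ⟨_, rfl⟩

lemma nf_gen_mul (g : Gen N) (q : QGamma N) : nf (gen g * q) = (nf q).bind (gact g) := by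
  apply Option.some_injective
  rw [← qact_none, qact_mul, qact_gen]
  change act g (qact q none) = _
  rw [qact_none]
  rfl

lemma nf_gen (g : Gen N) : nf (gen g) = (base g).bind (gact g) := by
  apply Option.some_injective
  rw [← qact_none, qact_gen]
  rfl

/-- Every element is the value of its normal form; hence `nf` is injective. -/
lemma val_nf (q : QGamma N) : valO (nf q) = q := by
  induction q using q_ind with
  | h1 g => rw [nf_gen, val_bind_gact, gen_base]
  | h2 g q hq => rw [nf_gen_mul, val_bind_gact, hq]

lemma nf_injective : Function.Injective (nf (N := N)) := fun p q h => by
  rw [← val_nf p, h, val_nf]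

/-! ### Left cancellation and existence of idempotents -/

lemma vx_cancel {A C : N.T0} (hAC : (A.1 ∩ C.1).Nonempty) {u v : QGamma N}
    (hu : vx C * u = u) (hv : vx C * v = v) (h : vx A * u = vx A * v) : u = v := by
  have src (w : QGamma N) (hw : vx C * w = w) (y : NF N) (hy : nf w = some y) : y.src = C := by
    rw [← hw, vx, nf_gen_mul, Option.bind_eq_some_iff] at hy
    obtain ⟨z, -, hz⟩ := hy
    exact vact_src hz
  by_cases hne : A = C
  · subst hne; rw [← hu, ← hv, h]
  have act (y : NF N) (hy : y.src = C) : gact (.ver A) y = some (.hop A C hne y) := by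
    subst hy
    simp [gact, vact, hne, hAC]
  have h' := congrArg nf h
  rw [vx, nf_gen_mul, nf_gen_mul] at h'
  apply nf_injective
  cases hy : nf u with
  | none =>
    cases hz : nf v with
    | none => rfl
    | some z => rw [hy, hz, Option.bind_some, act z (src v hv z hz)] at h'; cases h'
  | some y =>
    cases hz : nf v with
    | none => rw [hy, hz, Option.bind_some, act y (src u hu y hy)] at h'; cases h'
    | some z =>
      rw [hy, hz, Option.bind_some, Option.bind_some, act y (src u hu y hy),
        act z (src v hv z hz)] at h'
      simpa using h'

/-- A nonzero element factors as its path part times its inverse part, and the path part is left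
cancellable. -/
lemma factor (y : NF N) (h : y.val ≠ Qzero N) : ∃ p : QGamma N, vx y.src * p = p ∧
    y.val = p * y.inverse.val ∧ ∀ u v, vx y.inverse.src * u = u → vx y.inverse.src * v = v →
      p * u = p * v → u = v := by
  have meet (A : N.T0) (y : NF N) (h : vx A * y.val ≠ Qzero N) : (A.1 ∩ y.src.1).Nonempty := by
    by_contra h'
    rw [← y.src_val, ← mul_assoc, vx_disj (Set.not_nonempty_iff_eq_empty.1 h'), zero_mul_q] at h
    exact h rfl
  have cancel (A : N.T0) (y : NF N) (p u v : QGamma N) (h : (A.1 ∩ y.src.1).Nonempty)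
      (hp : vx y.src * p = p) (huv : vx A * (p * u) = vx A * (p * v)) : p * u = p * v :=
    vx_cancel h (by rw [← mul_assoc, hp]) (by rw [← mul_assoc, hp]) huv
  induction y with
  | tail τ =>
    refine ⟨vx τ.src, vx_vx _, τ.src_val.symm, fun u v hu hv h => ?_⟩
    rw [← hu, ← hv]; exact h
  | pos t y ih =>
    obtain ⟨p, hp, hy, hc⟩ := ih fun h' => h (by rw [NF.val, h', mul_zero_q])
    refine ⟨ps t * p, ?_, ?_, fun u v hu hv huv => hc u v hu hv (cancel (N.rT t) y p u v ?_ hp ?_)⟩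
    · rw [← mul_assoc, NF.src, vx_ps]
    · rw [NF.val, hy, mul_assoc]; rfl
    · refine meet _ _ fun h' => h ?_
      rw [NF.val, ← ps_vx, mul_assoc, h', mul_zero_q]
    · have := congrArg (ng t * ·) huv
      simpa only [← mul_assoc, ng_ps] using this
  | hop A C hAC y ih =>
    have h1 : vx C * y.val ≠ Qzero N := fun h' => h (by rw [NF.val, h', mul_zero_q])
    obtain ⟨p, hp, hy, hc⟩ := ih fun h' => h1 (by rw [h', mul_zero_q])
    refine ⟨vx A * (vx C * p), ?_, ?_, fun u v hu hv huv =>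
      hc u v hu hv (cancel C y p u v (meet _ _ h1) hp ?_)⟩
    · rw [← mul_assoc, NF.src, vx_vx]
    · rw [NF.val, hy, mul_assoc, mul_assoc]; rfl
    · refine vx_cancel (A := A) (C := C) ?_ ?_ ?_ ?_
      · by_contra h'
        refine h ?_
        rw [NF.val, ← mul_assoc, vx_disj (Set.not_nonempty_iff_eq_empty.1 h'), zero_mul_q]
      · rw [← mul_assoc, vx_vx]
      · rw [← mul_assoc, vx_vx]
      · simpa only [mul_assoc] using huv

/-- The inverse path `A tₘ ⋯ t₁` of an inverse part `t₁⁻¹ ⋯ tₘ⁻¹ A`. -/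
def Tail.co : Tail N → QGamma N
  | .vert A => vx A
  | .inv t τ => τ.co * ps t

lemma Tail.val_ne {t : T} {τ : Tail N} (h : (Tail.inv t τ).val ≠ Qzero N) :
    τ.val ≠ Qzero N ∧ τ.src = N.sT t := by
  refine ⟨fun h' => h (by rw [val, h', mul_zero_q]), ?_⟩
  by_contra h'
  rw [val, ← τ.src_val, ← mul_assoc, ng_vx_ne h', zero_mul_q] at h
  exact h rfl

lemma Tail.val_co (τ : Tail N) (h : τ.val ≠ Qzero N) : τ.val * τ.co = vx τ.src := by
  induction τ with
  | vert A => exact vx_vx A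
  | inv t τ ih =>
    obtain ⟨h1, h2⟩ := val_ne h
    have : ng t * τ.val * (τ.co * ps t) = ng t * (τ.val * τ.co) * ps t := by
      simp only [mul_assoc]
    rw [val, co, this, ih h1, h2, ng_vx, ng_ps, src]

lemma exists_idem (a : QGamma N) : ∃ e : QGamma N, IsIdempotentElem e ∧ LStar a e := by
  have ha := val_nf a
  by_cases h0 : a = Qzero N
  · refine ⟨a, ?_, fun x y => Iff.rfl⟩
    rw [h0]; exact zero_mul_q _
  cases hy : nf a with
  | none => rw [hy] at ha; exact absurd ha.symm h0
  | some y =>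
    rw [hy] at ha
    change y.val = a at ha
    obtain ⟨p, -, hp, hc⟩ := factor y (ha ▸ h0)
    rw [ha] at hp
    set τ := y.inverse
    have hd : τ.val ≠ Qzero N := fun h => h0 (by rw [hp, h, mul_zero_q])
    have hdcd : τ.val * (τ.co * τ.val) = τ.val := by
      rw [← mul_assoc, τ.val_co hd, τ.src_val]
    refine ⟨τ.co * τ.val, ?_, fun x y => ?_⟩
    · rw [IsIdempotentElem, mul_assoc, hdcd]
    -- a right multiple of `τ.val` by an element of `S¹` lies in `S` and starts at `τ.src`
    have hr (x : WithOne (QGamma N)) :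
        ∃ u : QGamma N, (τ.val : WithOne (QGamma N)) * x = u ∧ vx τ.src * u = u := by
      cases x with
      | one => exact ⟨τ.val, mul_one _, τ.src_val⟩
      | coe x => exact ⟨τ.val * x, rfl, by rw [← mul_assoc, τ.src_val]⟩
    obtain ⟨u, hu, hu'⟩ := hr x
    obtain ⟨v, hv, hv'⟩ := hr y
    rw [hp, WithOne.coe_mul, WithOne.coe_mul, mul_assoc, mul_assoc, mul_assoc, mul_assoc, hu, hv,
      ← WithOne.coe_mul, ← WithOne.coe_mul, ← WithOne.coe_mul, ← WithOne.coe_mul,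
      WithOne.coe_inj, WithOne.coe_inj]
    constructor
    · intro h
      rw [hc u v hu' hv' h]
    · intro h
      have h' := congrArg (τ.val * ·) h
      simp only [← mul_assoc, τ.val_co hd, hu', hv'] at h'
      rw [h']

/-! ### Uniqueness of idempotents -/

/-- Left multiplication of a normal form by an inverse part. -/
noncomputable def tact : Tail N → NF N → Option (NF N)
  | .vert A, y => vact A y
  | .inv t τ, y => (tact τ y).bind (nact t)

lemma nf_tail_mul (τ : Tail N) (q : QGamma N) : nf (τ.val * q) = (nf q).bind (tact τ) := by
  induction τ with
  | vert A => exact nf_gen_mul _ _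
  | inv t τ ih =>
    rw [Tail.val, mul_assoc, ng, nf_gen_mul, ih, Option.bind_assoc]
    rfl

lemma nf_tail (τ : Tail N) (h : τ.val ≠ Qzero N) : nf τ.val = some (.tail τ) := by
  induction τ with
  | vert A => exact (nf_gen (.ver A)).trans (vact_self rfl)
  | inv t τ ih =>
    obtain ⟨h1, h2⟩ := Tail.val_ne h
    rw [Tail.val, ng, nf_gen_mul, ih h1]
    exact if_pos h2

/-- The possible products `y` of an inverse part `τ = β⁻¹` with a normal form `x = γδ⁻¹`. Either
`y` is zero or starts with a change of vertex set; or `β` is a prefix of `γ`, which is cancelled;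
or `γ` is a proper prefix of `β`, and `y` is an inverse part. -/
lemma tact_cases (τ : Tail N) (x : NF N) :
    tact τ x = none ∨ (∃ (A C : N.T0) (h : A ≠ C) (z : NF N), tact τ x = some (.hop A C h z)) ∨
    (∃ y, tact τ x = some y ∧ x.val = τ.co * y.val ∧ x.len = τ.len + y.len ∧
      y.inverse = x.inverse) ∨
    (∃ σ, tact τ x = some (.tail σ) ∧ σ.len + x.len = τ.len + x.inverse.len ∧
      x.len < τ.len) := by
  have hv (A : N.T0) (y : NF N) : vact A y = none ∨
      (∃ (A' C : N.T0) (h : A' ≠ C) (z : NF N), vact A y = some (.hop A' C h z)) ∨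
      (vact A y = some y ∧ A = y.src) := by
    by_cases h1 : A = y.src
    · exact .inr (.inr ⟨vact_self h1.symm, h1⟩)
    by_cases h2 : (A.1 ∩ y.src.1).Nonempty
    · exact .inr (.inl ⟨A, y.src, h1, y, by simp [vact, h1, h2]⟩)
    · exact .inl (by simp [vact, h1, h2])
  induction τ with
  | vert A =>
    rcases hv A x with h | ⟨A', C, hAC, z, h⟩ | ⟨h, rfl⟩
    · exact .inl h
    · exact .inr (.inl ⟨A', C, hAC, z, h⟩)
    · exact .inr (.inr (.inl ⟨x, h, x.src_val.symm, (zero_add _).symm, rfl⟩))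
  | inv t τ ih =>
    have tail (σ : Tail N) : nact t (.tail σ) = none ∨
        nact t (.tail σ) = some (.tail (.inv t σ)) := by
      simp only [nact]; split_ifs <;> simp
    rcases ih with h | ⟨A, C, hAC, z, h⟩ | ⟨y, h, h1, h2, h3⟩ | ⟨σ, h, h1, h2⟩ <;>
      simp only [tact, h, Option.bind_none, Option.bind_some]
    · exact .inl trivial
    · exact .inl rfl
    · cases y with
      | tail σ =>
        rcases tail σ with h' | h' <;> rw [h']
        · exact .inl rfl
        · refine .inr (.inr (.inr ⟨_, rfl, ?_, ?_⟩))
          · change σ = _ at h3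
            simp only [Tail.len, NF.len] at *
            rw [← h3]; omega
          · simp only [Tail.len, NF.len] at *; omega
      | pos t' y =>
        by_cases ht : t = t'
        · subst ht
          have h4 : nact t (.pos t y) = vact (N.rT t) y := if_pos rfl
          rw [h4]
          rcases hv (N.rT t) y with h | ⟨A, C, hAC, z, h⟩ | ⟨h, -⟩
          · exact .inl h
          · exact .inr (.inl ⟨A, C, hAC, z, h⟩)
          · refine .inr (.inr (.inl ⟨y, h, ?_, ?_, h3⟩))
            · rw [h1, NF.val, Tail.co, mul_assoc]
            · simp only [Tail.len, NF.len] at *; omega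
        · exact .inl (if_neg ht)
      | hop A C hAC y => exact .inl rfl
    · rcases tail σ with h' | h' <;> rw [h']
      · exact .inl rfl
      · refine .inr (.inr (.inr ⟨_, rfl, ?_, ?_⟩)) <;> simp only [Tail.len] at * <;> omega

/-- If `β⁻¹a = β⁻¹ ≠ 0` and `a = γδ⁻¹`, then `γ` is no longer than `β` and has the same length
as `δ`; if `γ` and `β` have the same length, then `a = ββ⁻¹`. -/
lemma absorb {τ : Tail N} (hτ : τ.val ≠ Qzero N) {x : NF N} {a : QGamma N} (ha : nf a = some x)
    (h : τ.val * a = τ.val) :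
    x.len ≤ τ.len ∧ τ.len + x.len = τ.len + x.inverse.len ∧
      (x.len = τ.len → x.inverse = τ ∧ a = τ.co * τ.val) := by
  have h1 := nf_tail_mul τ a
  rw [h, nf_tail τ hτ, ha, Option.bind_some] at h1
  have hx : x.val = a := by simpa [ha, valO] using val_nf a
  rcases tact_cases τ x with h2 | ⟨A, C, hAC, z, h2⟩ | ⟨y, h2, h3, h4, h5⟩ | ⟨σ, h2, h3, h4⟩ <;>
    rw [h2] at h1
  · cases h1
  · cases h1
  · obtain rfl : NF.tail τ = y := Option.some_injective _ h1
    change τ = _ at h5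
    refine ⟨h4.le, by rw [h4, ← h5]; rfl, fun _ => ⟨h5.symm, ?_⟩⟩
    rw [← hx, h3]; rfl
  · obtain rfl : τ = σ := by simpa using h1
    exact ⟨h4.le, h3, fun h => absurd h h4.ne⟩

lemma idem_unique {e f : QGamma N} (he : e * e = e) (hf : f * f = f) (hef : e * f = e)
    (hfe : f * e = f) : e = f := by
  by_cases he0 : e = Qzero N
  · rw [he0, mul_zero_q] at hfe; rw [he0, hfe]
  by_cases hf0 : f = Qzero N
  · rw [hf0, mul_zero_q] at hef; rw [hf0, hef]
  -- `a = p d` with `p` left cancellable, so `a b = a` gives `d b = d`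
  have dec (a : QGamma N) (ha : a ≠ Qzero N) : ∃ x : NF N, nf a = some x ∧
      x.inverse.val ≠ Qzero N ∧ ∀ b, a * b = a → x.inverse.val * b = x.inverse.val := by
    have hv := val_nf a
    cases hx : nf a with
    | none => rw [hx] at hv; exact absurd hv.symm ha
    | some x =>
      rw [hx] at hv
      change x.val = a at hv
      obtain ⟨p, -, hp, hc⟩ := factor x (hv ▸ ha)
      rw [hv] at hp
      refine ⟨x, rfl, fun h => ha (by rw [hp, h, mul_zero_q]), fun b hb => ?_⟩
      refine hc _ _ (by rw [← mul_assoc, Tail.src_val]) (Tail.src_val _) ?_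
      rw [← mul_assoc, ← hp, hb]
  obtain ⟨x, hx, hx0, hxb⟩ := dec e he0
  obtain ⟨y, hy, hy0, hyb⟩ := dec f hf0
  obtain ⟨-, h1, h1'⟩ := absorb hx0 hx (hxb e he)
  obtain ⟨-, h2, -⟩ := absorb hy0 hy (hyb f hf)
  obtain ⟨h3, -, h3'⟩ := absorb hx0 hy (hxb f hef)
  obtain ⟨h4, -, -⟩ := absorb hy0 hx (hyb e hfe)
  rw [(h1' (by omega)).2, (h3' (by omega)).2]

/-- for any network `Γ`, the semigroup `Q_Γ` is right `*`-abundant with a zero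
element: every `L*`-class contains exactly one idempotent, and `[0]` is a zero. -/
theorem QGamma_right_star_abundant (N : Network V T) :
    (∀ a : QGamma N, ∃! e : QGamma N, IsIdempotentElem e ∧ LStar a e) ∧
    (∀ a : QGamma N, Qzero N * a = Qzero N ∧ a * Qzero N = Qzero N) := by
  refine ⟨fun a => ?_, fun a => ⟨zero_mul_q a, mul_zero_q a⟩⟩
  obtain ⟨e, he, hae⟩ := exists_idem a
  refine ⟨e, ⟨he, hae⟩, ?_⟩
  rintro f ⟨hf, haf⟩
  -- `e e = e 1` transfers along `L*`, giving `f e = f`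
  have key (e f : QGamma N) (he : IsIdempotentElem e) (h : ∀ x y : WithOne (QGamma N),
      (e : WithOne (QGamma N)) * x = e * y ↔ (f : WithOne (QGamma N)) * x = f * y) :
      f * e = f := by
    have h1 := (h e 1).1 (by rw [← WithOne.coe_mul, he.eq, mul_one])
    rwa [mul_one, ← WithOne.coe_mul, WithOne.coe_inj] at h1
  exact idem_unique hf he (key e f he fun x y => (hae x y).symm.trans (haf x y))
    (key f e hf fun x y => (haf x y).symm.trans (hae x y))

end NetworkSemigroup
end
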